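/- arXiv:2106.15256 — 2 statements merged into one kernel-verified Lean document; each statement's English description precedes it below -/
import Mathlib

section
/- Let b ∈ ℕ⁺ and τ ∈ {τ_ZPT^b, τ_ZPPT^b}. Let U = U(A₀,…,A_n) be a union of (initialized) TS such that for every event e ∈ E(U) there is a state s ∈ S(U) with δ(s,e) undefined. Then U has the τ-ESSP if and only if the joining J(U) has the τ-ESSP, and U has the τ-SSP if and only if J(U) has the τ-SSP. -/
namespace PNS

/-- Events of a (b-bounded) type of nets: either a pair `(m,n)` or a group element `z ∈ {0,…,b}`. -/
inductive BEvent : Type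
  | pair : ℕ → ℕ → BEvent
  | num : ℕ → BEvent
  deriving DecidableEq

/-- A type of nets `τ = (S_τ, E_τ, δ_τ)` with `S_τ ⊆ ℕ`. -/
structure NetType : Type where
  states : Set ℕ
  events : Set BEvent
  delta : ℕ → BEvent → Option ℕ

def deltaPT (b : ℕ) : ℕ → BEvent → Option ℕ
  | s, .pair m n => if m ≤ s ∧ s - m + n ≤ b then some (s - m + n) else none
  | _, .num _ => none

def deltaZPT (b : ℕ) : ℕ → BEvent → Option ℕ
  | s, .pair m n => if m ≤ s ∧ s - m + n ≤ b then some (s - m + n) else none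
  | s, .num z => some ((s + z) % (b + 1))

def deltaRZPT (b : ℕ) : ℕ → BEvent → Option ℕ
  | s, .pair m n => if s = m ∧ n ≤ b then some n else none
  | s, .num z => some ((s + z) % (b + 1))

/-- The type of `b`-bounded P/T-nets. -/
def tauPT (b : ℕ) : NetType :=
  ⟨{s | s ≤ b}, {e | ∃ m n, e = BEvent.pair m n ∧ m ≤ b ∧ n ≤ b}, deltaPT b⟩

/-- The type of pure `b`-bounded P/T-nets. -/
def tauPPT (b : ℕ) : NetType :=
  ⟨{s | s ≤ b}, {e | ∃ m n, e = BEvent.pair m n ∧ m ≤ b ∧ n ≤ b ∧ (m = 0 ∨ n = 0)}, deltaPT b⟩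

/-- The type of `ℤ_{b+1}`-extended `b`-bounded P/T-nets. -/
def tauZPT (b : ℕ) : NetType :=
  ⟨{s | s ≤ b},
   {e | (∃ m n, e = BEvent.pair m n ∧ m ≤ b ∧ n ≤ b ∧ ¬(m = 0 ∧ n = 0)) ∨
        (∃ z, e = BEvent.num z ∧ z ≤ b)}, deltaZPT b⟩

/-- The type of pure `ℤ_{b+1}`-extended `b`-bounded P/T-nets. -/
def tauZPPT (b : ℕ) : NetType :=
  ⟨{s | s ≤ b},
   {e | (∃ m n, e = BEvent.pair m n ∧ m ≤ b ∧ n ≤ b ∧ ¬(m = 0 ∧ n = 0) ∧ (m = 0 ∨ n = 0)) ∨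
        (∃ z, e = BEvent.num z ∧ z ≤ b)}, deltaZPT b⟩

/-- The type of restricted `ℤ_{b+1}`-extended `b`-bounded P/T-nets. -/
def tauRZPT (b : ℕ) : NetType :=
  ⟨{s | s ≤ b},
   {e | (∃ m n, e = BEvent.pair m n ∧ m ≤ b ∧ n ≤ b ∧ ¬(m = 0 ∧ n = 0)) ∨
        (∃ z, e = BEvent.num z ∧ z ≤ b)}, deltaRZPT b⟩

/-- A (deterministic, initialized) transition system with states `S`, events `E`. -/
structure TS (S E : Type) : Type where
  delta : S → E → Option S
  init : S

def TS.Reachable {S E : Type} (A : TS S E) (s : S) : Prop :=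
  Relation.ReflTransGen (fun x y => ∃ e, A.delta x e = some y) A.init s

/-- Every state is reachable from the initial state. -/
def TS.Initialized {S E : Type} (A : TS S E) : Prop :=
  ∀ s, A.Reachable s

/-- A `τ`-region `(sup, sig)` of a TS `A`. -/
structure IsRegion (τ : NetType) {S E : Type} (A : TS S E)
    (sup : S → ℕ) (sig : E → BEvent) : Prop where
  sup_mem : ∀ s, sup s ∈ τ.states
  sig_mem : ∀ e, sig e ∈ τ.events
  edge : ∀ s e s', A.delta s e = some s' → τ.delta (sup s) (sig e) = some (sup s')

/-- `A` has the `τ`-state separation property. -/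
def HasSSP (τ : NetType) {S E : Type} (A : TS S E) : Prop :=
  ∀ s s' : S, s ≠ s' → ∃ sup sig, IsRegion τ A sup sig ∧ sup s ≠ sup s'

/-- `A` has the `τ`-event state separation property. -/
def HasESSP (τ : NetType) {S E : Type} (A : TS S E) : Prop :=
  ∀ (e : E) (s : S), A.delta s e = none →
    ∃ sup sig, IsRegion τ A sup sig ∧ τ.delta (sup s) (sig e) = none

def Solvable (τ : NetType) {S E : Type} (A : TS S E) : Prop :=
  HasESSP τ A ∧ HasSSP τ A

def sigMinus : BEvent → ℕ
  | .pair m _ => m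
  | .num _ => 0

def sigPlus : BEvent → ℕ
  | .pair _ n => n
  | .num _ => 0

def sigAbs : BEvent → ℕ
  | .pair _ _ => 0
  | .num z => z

open Classical in
/-- The linear TS `s₀ −ev 0→ s₁ −ev 1→ … −ev (m-1)→ s_m` on the `m+1` pairwise
distinct states `Fin (m+1)` with initial state `0`. -/
noncomputable def linTS {E : Type} (m : ℕ) (ev : ℕ → E) : TS (Fin (m + 1)) E where
  init := ⟨0, Nat.succ_pos m⟩
  delta s e :=
    if h : (s : ℕ) < m ∧ ev (s : ℕ) = e then some ⟨(s : ℕ) + 1, Nat.succ_lt_succ h.1⟩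
    else none

/-- The linear TS whose sequence of edge labels is the list `l`. -/
noncomputable def linOfList {E : Type} (l : List E) (d : E) : TS (Fin (l.length + 1)) E :=
  linTS l.length (fun i => l.getD i d)

/-- A `τ`-region of the union `U(A i)` of TS with pairwise disjoint state sets
(modeled by a sigma type) and shared events `E`. -/
def UnionRegion (τ : NetType) {ι : Type} {S : ι → Type} {E : Type}
    (A : ∀ i, TS (S i) E) (sup : (Σ i, S i) → ℕ) (sig : E → BEvent) : Prop :=
  (∀ s, sup s ∈ τ.states) ∧ (∀ e, sig e ∈ τ.events) ∧
    ∀ (i : ι) (s : S i) (e : E) (s' : S i),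
      (A i).delta s e = some s' → τ.delta (sup ⟨i, s⟩) (sig e) = some (sup ⟨i, s'⟩)

/-- The union has the `τ`-SSP: every SSA (pair of distinct states of the same
constituent) is solved by a `τ`-region of the union. -/
def UnionHasSSP (τ : NetType) {ι : Type} {S : ι → Type} {E : Type}
    (A : ∀ i, TS (S i) E) : Prop :=
  ∀ (i : ι) (s s' : S i), s ≠ s' →
    ∃ sup sig, UnionRegion τ A sup sig ∧ sup ⟨i, s⟩ ≠ sup ⟨i, s'⟩

/-- The union has the `τ`-ESSP: every ESSA is solved by a `τ`-region of the union. -/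
def UnionHasESSP (τ : NetType) {ι : Type} {S : ι → Type} {E : Type}
    (A : ∀ i, TS (S i) E) : Prop :=
  ∀ (e : E) (i : ι) (s : S i), (A i).delta s e = none →
    ∃ sup sig, UnionRegion τ A sup sig ∧ τ.delta (sup ⟨i, s⟩) (sig e) = none

/-- The joining `J(U)` of a union of (initialized) TS: a fresh initial state `q₀`
and further fresh states `q₁,…,q_n` (`Sum.inr i` represents `q_i`), fresh events
`w₁,…,w_n` (`Sum.inr (Sum.inl j)` represents `w_{j+1}`) and `y₀,…,y_n`
(`Sum.inr (Sum.inr i)` represents `y_i`), together with the edges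
`q_i −w_{i+1}→ q_{i+1}` and `q_i −y_i→ ι_i`. -/
def JoinTS {n : ℕ} {S : Fin (n + 1) → Type} {E : Type} (A : ∀ i, TS (S i) E) :
    TS ((Σ i, S i) ⊕ Fin (n + 1)) (E ⊕ (Fin n ⊕ Fin (n + 1))) where
  init := Sum.inr ⟨0, Nat.succ_pos n⟩
  delta s e :=
    match s, e with
    | Sum.inl ⟨i, si⟩, Sum.inl e =>
        Option.map (fun s' => Sum.inl ⟨i, s'⟩) ((A i).delta si e)
    | Sum.inr i, Sum.inr (Sum.inl j) =>
        if (i : ℕ) = (j : ℕ) then some (Sum.inr ⟨(j : ℕ) + 1, Nat.succ_lt_succ j.isLt⟩)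
        else none
    | Sum.inr i, Sum.inr (Sum.inr j) =>
        if i = j then some (Sum.inl ⟨i, (A i).init⟩) else none
    | _, _ => none

/-!
A region of `J(U)` is a region of `U` together with supports of the states `qᵢ` and signatures of
the events `w`, `y` matching the edges they label. If any two states of `τ` are joined by an event,
such signatures always exist, so the supports of the `qᵢ` can be prescribed at will: every region of
`U` extends to `J(U)`, and in particular an event of `U` that is disabled at some state of `U` can
be disabled at all `qᵢ` by copying the support of that state. The atoms that are new in `J(U)` are
solved by regions constant on each constituent, where a neutral event of `τ` is the signature of all
events of `U`, and, for a fresh event, by giving it a signature that is disabled after its own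
occurrence, since it labels only one edge.
-/

namespace NetType

/-- A type of nets is complete if some event leads from any state to any other, or the same, state
in one step; this is what lets regions be extended along fresh events. -/
def IsComplete (τ : NetType) : Prop :=
  ∀ x ∈ τ.states, ∀ y ∈ τ.states, ∃ e ∈ τ.events, τ.delta x e = some y

/-- A neutral event fixes every state; as the signature of all events, it makes any support that is
constant on each constituent a region. -/
def HasNeutralEvent (τ : NetType) : Prop :=
  ∃ e ∈ τ.events, ∀ x ∈ τ.states, τ.delta x e = some x

/-- A self-disabling event can occur at some state, but not a second time right after; it separates
the source of an event that labels a single edge from all other states. -/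
def HasSelfDisablingEvent (τ : NetType) : Prop :=
  ∃ e ∈ τ.events, ∃ x ∈ τ.states, ∃ y ∈ τ.states, τ.delta x e = some y ∧ τ.delta y e = none

theorem HasSelfDisablingEvent.nontrivial_states {τ : NetType} (h : τ.HasSelfDisablingEvent) :
    τ.states.Nontrivial := by
  obtain ⟨e, -, x, hx, y, hy, hxy, hye⟩ := h
  refine ⟨x, hx, y, hy, ?_⟩
  rintro rfl
  simp [hxy] at hye

/-- `σ` is the restriction of `τ` obtained by discarding events: all states are kept, and so is the
effect of the remaining events. -/
structure IsRestriction (σ τ : NetType) : Prop where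
  states_eq : σ.states = τ.states
  delta_eq : σ.delta = τ.delta
  events_subset : σ.events ⊆ τ.events

namespace IsRestriction

variable {σ τ : NetType}

theorem refl (τ : NetType) : τ.IsRestriction τ :=
  ⟨rfl, rfl, subset_rfl⟩

theorem isComplete (h : σ.IsRestriction τ) (hσ : σ.IsComplete) : τ.IsComplete := by
  intro x hx y hy
  obtain ⟨e, he, hxy⟩ := hσ x (h.states_eq ▸ hx) y (h.states_eq ▸ hy)
  exact ⟨e, h.events_subset he, h.delta_eq ▸ hxy⟩

theorem hasNeutralEvent (h : σ.IsRestriction τ) (hσ : σ.HasNeutralEvent) : τ.HasNeutralEvent := by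
  obtain ⟨e, he, hfix⟩ := hσ
  exact ⟨e, h.events_subset he, h.delta_eq ▸ h.states_eq ▸ hfix⟩

theorem hasSelfDisablingEvent (h : σ.IsRestriction τ) (hσ : σ.HasSelfDisablingEvent) :
    τ.HasSelfDisablingEvent := by
  obtain ⟨e, he, hdis⟩ := hσ
  exact ⟨e, h.events_subset he, h.delta_eq ▸ h.states_eq ▸ hdis⟩

end IsRestriction

end NetType

section TauZPPT

variable {b : ℕ}

theorem num_mem_events_tauZPPT {z : ℕ} (hz : z ≤ b) : BEvent.num z ∈ (tauZPPT b).events :=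
  Or.inr ⟨z, rfl, hz⟩

theorem tauZPPT_isComplete : (tauZPPT b).IsComplete := by
  intro x (hx : x ≤ b) y (hy : y ≤ b)
  refine ⟨.num ((y + (b + 1) - x) % (b + 1)),
    num_mem_events_tauZPPT (Nat.lt_succ_iff.mp (Nat.mod_lt _ b.succ_pos)), congrArg some ?_⟩
  calc (x + (y + (b + 1) - x) % (b + 1)) % (b + 1)
      = (x + (y + (b + 1) - x)) % (b + 1) := Nat.add_mod_mod ..
    _ = (y + (b + 1)) % (b + 1) := by rw [Nat.add_sub_of_le (by omega)]
    _ = y := by rw [Nat.add_mod_right, Nat.mod_eq_of_lt (Nat.lt_succ_of_le hy)]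

theorem tauZPPT_hasNeutralEvent : (tauZPPT b).HasNeutralEvent :=
  ⟨.num 0, num_mem_events_tauZPPT b.zero_le, fun _ hx =>
    congrArg some (Nat.mod_eq_of_lt (Nat.lt_succ_of_le hx))⟩

theorem tauZPPT_hasSelfDisablingEvent (hb : 1 ≤ b) : (tauZPPT b).HasSelfDisablingEvent := by
  refine ⟨.pair 0 b, Or.inl ⟨0, b, rfl, b.zero_le, le_rfl, by omega, Or.inl rfl⟩,
    0, b.zero_le, b, le_refl b, ?_, ?_⟩
  · simp [tauZPPT, deltaZPT]
  · simp only [tauZPPT, deltaZPT, ite_eq_right_iff]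
    omega

theorem tauZPPT_isRestriction_tauZPT : (tauZPPT b).IsRestriction (tauZPT b) where
  states_eq := rfl
  delta_eq := rfl
  events_subset := by
    rintro e (⟨m, n, rfl, hm, hn, hne, -⟩ | hnum)
    exacts [Or.inl ⟨m, n, rfl, hm, hn, hne⟩, Or.inr hnum]

end TauZPPT

theorem unionRegion_const {τ : NetType} {ι : Type} {S : ι → Type} {E : Type}
    {A : ∀ i, TS (S i) E} {c : ι → ℕ} {e : BEvent} (hc : ∀ i, c i ∈ τ.states)
    (he : e ∈ τ.events) (hfix : ∀ i, τ.delta (c i) e = some (c i)) :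
    UnionRegion τ A (fun s => c s.1) (fun _ => e) :=
  ⟨fun s => hc s.1, fun _ => he, fun i _ _ _ _ => hfix i⟩

section Joining

variable {n : ℕ} {S : Fin (n + 1) → Type} {E : Type}

/-- The index of the unique state at which a fresh event of the joining occurs: `w_{j+1}` occurs at
`qⱼ` and `yᵢ` at `qᵢ`. -/
def joinSource : Fin n ⊕ Fin (n + 1) → Fin (n + 1) :=
  Sum.elim Fin.castSucc id

/-- The unique state to which a fresh event of the joining leads: `q_{j+1}` for `w_{j+1}` and `ιᵢ`
for `yᵢ`. -/
def joinTarget (A : ∀ i, TS (S i) E) : Fin n ⊕ Fin (n + 1) → (Σ i, S i) ⊕ Fin (n + 1) :=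
  Sum.elim (fun j => .inr j.succ) (fun i => .inl ⟨i, (A i).init⟩)

theorem joinTarget_ne_joinSource (A : ∀ i, TS (S i) E) (e : Fin n ⊕ Fin (n + 1)) :
    joinTarget A e ≠ .inr (joinSource e) := by
  rcases e with j | i
  · simpa [joinTarget, joinSource] using j.castSucc_lt_succ.ne'
  · simp [joinTarget]

variable {A : ∀ i, TS (S i) E}

theorem joinTS_delta_inl_inl_eq_none_iff {i : Fin (n + 1)} {s : S i} {e : E} :
    (JoinTS A).delta (.inl ⟨i, s⟩) (.inl e) = none ↔ (A i).delta s e = none := by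
  simp [JoinTS]

theorem joinTS_delta_inl_eq_some_iff {s t : (Σ i, S i) ⊕ Fin (n + 1)} {e : E} :
    (JoinTS A).delta s (.inl e) = some t ↔
      ∃ (i : Fin (n + 1)) (x y : S i),
        s = .inl ⟨i, x⟩ ∧ t = .inl ⟨i, y⟩ ∧ (A i).delta x e = some y := by
  rcases s with ⟨i, x⟩ | i
  · constructor
    · intro h
      obtain ⟨y, hy, rfl⟩ := Option.map_eq_some_iff.mp h
      exact ⟨i, x, y, rfl, rfl, hy⟩
    · rintro ⟨i, x, y, hs, rfl, hy⟩
      cases hs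
      exact Option.map_eq_some_iff.mpr ⟨y, hy, rfl⟩
  · simp [JoinTS]

theorem joinTS_delta_inr_eq_some_iff {s t : (Σ i, S i) ⊕ Fin (n + 1)} {e : Fin n ⊕ Fin (n + 1)} :
    (JoinTS A).delta s (.inr e) = some t ↔ s = .inr (joinSource e) ∧ t = joinTarget A e := by
  rcases s with s | i
  · simp [JoinTS]
  · rcases e with j | j
    · simp [JoinTS, joinSource, joinTarget, Fin.ext_iff, Fin.succ, eq_comm]
    · simp only [JoinTS, joinSource, joinTarget, Option.ite_none_right_eq_some, Option.some.injEq,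
        Sum.elim_inr, id_eq, Sum.inr.injEq]
      refine and_congr_right ?_
      rintro rfl
      exact eq_comm

theorem ne_joinSource_of_joinTS_delta_eq_none {s : (Σ i, S i) ⊕ Fin (n + 1)}
    {e : Fin n ⊕ Fin (n + 1)} (h : (JoinTS A).delta s (.inr e) = none) :
    s ≠ .inr (joinSource e) := by
  rintro rfl
  simp [joinTS_delta_inr_eq_some_iff.mpr ⟨rfl, rfl⟩] at h

variable {τ : NetType}

theorem isRegion_joinTS_iff {sup : (Σ i, S i) ⊕ Fin (n + 1) → ℕ}
    {sig : E ⊕ (Fin n ⊕ Fin (n + 1)) → BEvent} :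
    IsRegion τ (JoinTS A) sup sig ↔
      UnionRegion τ A (sup ∘ .inl) (sig ∘ .inl) ∧
      (∀ i, sup (.inr i) ∈ τ.states) ∧
      ∀ e, sig (.inr e) ∈ τ.events ∧
        τ.delta (sup (.inr (joinSource e))) (sig (.inr e)) = some (sup (joinTarget A e)) := by
  constructor
  · intro h
    refine ⟨⟨fun s => h.sup_mem _, fun e => h.sig_mem _, fun i s e s' hs => ?_⟩,
      fun i => h.sup_mem _, fun e => ⟨h.sig_mem _, ?_⟩⟩
    · exact h.edge _ _ _ (joinTS_delta_inl_eq_some_iff.mpr ⟨i, s, s', rfl, rfl, hs⟩)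
    · exact h.edge _ _ _ (joinTS_delta_inr_eq_some_iff.mpr ⟨rfl, rfl⟩)
  · rintro ⟨⟨hsup, hsig, hedge⟩, hq, hfresh⟩
    refine ⟨Sum.rec hsup hq, Sum.rec hsig fun e => (hfresh e).1, ?_⟩
    rintro s (e | e) t hst
    · obtain ⟨i, x, y, rfl, rfl, hxy⟩ := joinTS_delta_inl_eq_some_iff.mp hst
      exact hedge i x e y hxy
    · obtain ⟨rfl, rfl⟩ := joinTS_delta_inr_eq_some_iff.mp hst
      exact (hfresh e).2

theorem IsRegion.unionRegion {sup : (Σ i, S i) ⊕ Fin (n + 1) → ℕ}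
    {sig : E ⊕ (Fin n ⊕ Fin (n + 1)) → BEvent} (h : IsRegion τ (JoinTS A) sup sig) :
    UnionRegion τ A (sup ∘ .inl) (sig ∘ .inl) :=
  (isRegion_joinTS_iff.mp h).1

theorem UnionRegion.exists_isRegion_joinTS (hτ : τ.IsComplete) {sup : (Σ i, S i) → ℕ}
    {sig : E → BEvent} (h : UnionRegion τ A sup sig) {q : Fin (n + 1) → ℕ}
    (hq : ∀ i, q i ∈ τ.states) :
    ∃ f, IsRegion τ (JoinTS A) (Sum.elim sup q) (Sum.elim sig f) := by
  have hsup : ∀ s, Sum.elim sup q s ∈ τ.states := Sum.rec h.1 hq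
  choose f hf using fun e => hτ _ (hq (joinSource e)) _ (hsup (joinTarget A e))
  exact ⟨f, isRegion_joinTS_iff.mpr ⟨h, hq, hf⟩⟩

theorem exists_isRegion_joinTS_disabled_off_joinSource (hτ : τ.IsComplete)
    (hdis : τ.HasSelfDisablingEvent) (e : Fin n ⊕ Fin (n + 1)) :
    ∃ sup sig, IsRegion τ (JoinTS A) sup sig ∧
      ∀ s ≠ .inr (joinSource e), τ.delta (sup s) (sig (.inr e)) = none := by
  classical
  obtain ⟨d, hd, x, hx, y, hy, hxy, hyd⟩ := hdis
  obtain ⟨loop, hloop, hyy⟩ := hτ y hy y hy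
  let sup : (Σ i, S i) ⊕ Fin (n + 1) → ℕ := Function.update (fun _ => y) (.inr (joinSource e)) x
  have hsup_source : sup (.inr (joinSource e)) = x := Function.update_self ..
  have hsup_ne : ∀ s ≠ .inr (joinSource e), sup s = y := fun s hs => Function.update_of_ne hs ..
  have hsup_mem : ∀ s, sup s ∈ τ.states := fun s => by
    by_cases hs : s = .inr (joinSource e)
    · rwa [hs, hsup_source]
    · rwa [hsup_ne s hs]
  choose f hf using fun e' =>
    hτ _ (hsup_mem (.inr (joinSource e'))) _ (hsup_mem (joinTarget A e'))
  refine ⟨sup, Sum.elim (fun _ => loop) (Function.update f e d),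
    isRegion_joinTS_iff.mpr ⟨?_, fun i => hsup_mem _, fun e' => ?_⟩, fun s hs => ?_⟩
  · have hconst : sup ∘ .inl = fun _ => y := funext fun s => hsup_ne _ Sum.inl_ne_inr
    rw [hconst]
    exact unionRegion_const (fun _ => hy) hloop (fun _ => hyy)
  · by_cases he : e' = e
    · subst he
      rw [Sum.elim_inr, Function.update_self, hsup_source,
        hsup_ne _ (joinTarget_ne_joinSource A e')]
      exact ⟨hd, hxy⟩
    · rw [Sum.elim_inr, Function.update_of_ne he]
      exact hf e'
  · rw [Sum.elim_inr, Function.update_self, hsup_ne s hs, hyd]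

theorem UnionHasESSP.joinTS (hτ : τ.IsComplete) (hdis : τ.HasSelfDisablingEvent)
    (hundef : ∀ e : E, ∃ (i : Fin (n + 1)) (s : S i), (A i).delta s e = none)
    (hU : UnionHasESSP τ A) : HasESSP τ (JoinTS A) := by
  rintro (e | e) s hs
  · rcases s with ⟨i, s⟩ | i
    · obtain ⟨sup, sig, h, hsolve⟩ := hU e i s (joinTS_delta_inl_inl_eq_none_iff.mp hs)
      obtain ⟨f, hf⟩ := h.exists_isRegion_joinTS hτ fun _ => h.1 ⟨i, s⟩
      exact ⟨_, _, hf, hsolve⟩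
    · obtain ⟨k, t, ht⟩ := hundef e
      obtain ⟨sup, sig, h, hsolve⟩ := hU e k t ht
      obtain ⟨f, hf⟩ := h.exists_isRegion_joinTS hτ fun _ => h.1 ⟨k, t⟩
      exact ⟨_, _, hf, hsolve⟩
  · obtain ⟨sup, sig, h, hsolve⟩ := exists_isRegion_joinTS_disabled_off_joinSource hτ hdis e
    exact ⟨sup, sig, h, hsolve s (ne_joinSource_of_joinTS_delta_eq_none hs)⟩

theorem UnionHasESSP.of_joinTS (hJ : HasESSP τ (JoinTS A)) : UnionHasESSP τ A := by
  intro e i s hs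
  obtain ⟨sup, sig, h, hsolve⟩ := hJ _ _ (joinTS_delta_inl_inl_eq_none_iff.mpr hs)
  exact ⟨_, _, h.unionRegion, hsolve⟩

/-- The component of a state of the joining: its constituent, or the state itself if it is a `qᵢ`.
A union with the SSP leaves open only the separation of states from different components. -/
def joinComponent : (Σ i, S i) ⊕ Fin (n + 1) → Fin (n + 1) ⊕ Fin (n + 1) :=
  Sum.map Sigma.fst id

theorem exists_isRegion_joinTS_comp_joinComponent (hτ : τ.IsComplete) (hneutral : τ.HasNeutralEvent)
    {c : Fin (n + 1) ⊕ Fin (n + 1) → ℕ} (hc : ∀ k, c k ∈ τ.states) :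
    ∃ sig, IsRegion τ (JoinTS A) (c ∘ joinComponent) sig := by
  obtain ⟨e, he, hfix⟩ := hneutral
  have hU : UnionRegion τ A (fun s => c (.inl s.1)) (fun _ => e) :=
    unionRegion_const (fun _ => hc _) he fun _ => hfix _ (hc _)
  obtain ⟨f, hf⟩ := hU.exists_isRegion_joinTS hτ fun i => hc (.inr i)
  have hsup : c ∘ joinComponent = Sum.elim (fun s : Σ i, S i => c (.inl s.1)) (c ∘ .inr) :=
    funext (Sum.rec (fun _ => rfl) fun _ => rfl)
  exact ⟨_, hsup ▸ hf⟩

theorem exists_isRegion_joinTS_ne_of_joinComponent_ne (hτ : τ.IsComplete)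
    (hneutral : τ.HasNeutralEvent) (hstates : τ.states.Nontrivial) {s s' : (Σ i, S i) ⊕ Fin (n + 1)}
    (hne : joinComponent s ≠ joinComponent s') :
    ∃ sup sig, IsRegion τ (JoinTS A) sup sig ∧ sup s ≠ sup s' := by
  obtain ⟨x, hx, y, hy, hxy⟩ := hstates
  have hc : ∀ k, (if k = joinComponent s then x else y) ∈ τ.states := fun k => by
    split_ifs <;> assumption
  obtain ⟨sig, h⟩ := exists_isRegion_joinTS_comp_joinComponent (A := A) hτ hneutral hc
  exact ⟨_, sig, h, by simpa [hne.symm] using hxy⟩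

theorem UnionHasSSP.joinTS (hτ : τ.IsComplete) (hneutral : τ.HasNeutralEvent)
    (hstates : τ.states.Nontrivial) (hU : UnionHasSSP τ A) : HasSSP τ (JoinTS A) := by
  intro s s' hne
  by_cases hcomp : joinComponent s = joinComponent s'
  · rcases s with ⟨i, s⟩ | i <;> rcases s' with ⟨i', s'⟩ | i'
    · obtain rfl : i = i' := Sum.inl_injective hcomp
      obtain ⟨sup, sig, h, hsolve⟩ := hU i s s' fun hss => hne (by rw [hss])
      obtain ⟨f, hf⟩ := h.exists_isRegion_joinTS hτ fun _ => h.1 ⟨i, s⟩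
      exact ⟨_, _, hf, hsolve⟩
    · exact absurd hcomp Sum.inl_ne_inr
    · exact absurd hcomp Sum.inr_ne_inl
    · exact absurd (congrArg Sum.inr (Sum.inr_injective hcomp)) hne
  · exact exists_isRegion_joinTS_ne_of_joinComponent_ne hτ hneutral hstates hcomp

theorem UnionHasSSP.of_joinTS (hJ : HasSSP τ (JoinTS A)) : UnionHasSSP τ A := by
  intro i s s' hne
  obtain ⟨sup, sig, h, hsolve⟩ := hJ (.inl ⟨i, s⟩) (.inl ⟨i, s'⟩) (by simpa using hne)
  exact ⟨_, _, h.unionRegion, hsolve⟩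

end Joining

theorem stmt4_general {τ : NetType} (hτ : τ.IsComplete) (hneutral : τ.HasNeutralEvent)
    (hdis : τ.HasSelfDisablingEvent) {n : ℕ} {S : Fin (n + 1) → Type} {E : Type}
    (A : ∀ i, TS (S i) E)
    (hundef : ∀ e : E, ∃ (i : Fin (n + 1)) (s : S i), (A i).delta s e = none) :
    (UnionHasESSP τ A ↔ HasESSP τ (JoinTS A)) ∧
    (UnionHasSSP τ A ↔ HasSSP τ (JoinTS A)) :=
  ⟨⟨UnionHasESSP.joinTS hτ hdis hundef, UnionHasESSP.of_joinTS⟩,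
    ⟨UnionHasSSP.joinTS hτ hneutral hdis.nontrivial_states, UnionHasSSP.of_joinTS⟩⟩

/-- Let `τ ∈ {τ_ZPT^b, τ_ZPPT^b}` and let `U` be a union of
initialized TS such that every event of `E(U)` occurs somewhere and, for every
event `e ∈ E(U)`, there is a state at which `e` does not occur. Then `U` has the
`τ`-ESSP iff `J(U)` has the `τ`-ESSP, and `U` has the `τ`-SSP iff `J(U)` has the
`τ`-SSP. -/
theorem stmt4 (b : ℕ) (hb : 1 ≤ b) (τ : NetType) (hτ : τ = tauZPT b ∨ τ = tauZPPT b)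
    {n : ℕ} {S : Fin (n + 1) → Type} {E : Type} (A : ∀ i, TS (S i) E)
    (hinit : ∀ i, (A i).Initialized)
    (hocc : ∀ e : E, ∃ (i : Fin (n + 1)) (s s' : S i), (A i).delta s e = some s')
    (hundef : ∀ e : E, ∃ (i : Fin (n + 1)) (s : S i), (A i).delta s e = none) :
    (UnionHasESSP τ A ↔ HasESSP τ (JoinTS A)) ∧
    (UnionHasSSP τ A ↔ HasSSP τ (JoinTS A)) := by
  have hσ : (tauZPPT b).IsRestriction τ := by
    rcases hτ with rfl | rfl
    exacts [tauZPPT_isRestriction_tauZPT, .refl _]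
  exact stmt4_general (hσ.isComplete tauZPPT_isComplete)
    (hσ.hasNeutralEvent tauZPPT_hasNeutralEvent)
    (hσ.hasSelfDisablingEvent (tauZPPT_hasSelfDisablingEvent hb)) A hundef

end PNS
end

section
/- Let b ∈ ℕ⁺ and let φ be an instance of cubic monotone one-in-three 3-SAT. If φ has a one-in-three model, then the union U_{τ_PPT^b}(φ) has the τ_PPT^b-ESSP and the τ_PPT^b-SSP. -/
namespace PNS

/-- An instance of cubic monotone one-in-three 3-SAT with `m` clauses over the
`m` variables `Fin m`: the `i`-th clause is `{cl i 0, cl i 1, cl i 2}` with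
`cl i 0 < cl i 1 < cl i 2`, and every variable occurs in exactly three clauses. -/
structure CMSat (m : ℕ) : Type where
  cl : Fin m → Fin 3 → Fin m
  mono01 : ∀ i, cl i 0 < cl i 1
  mono12 : ∀ i, cl i 1 < cl i 2
  cubic : ∀ v : Fin m,
    (Finset.univ.filter (fun i => v = cl i 0 ∨ v = cl i 1 ∨ v = cl i 2)).card = 3

/-- `M` is a one-in-three model of `φ`: every clause contains exactly one variable of `M`. -/
def OneInThreeModel {m : ℕ} (φ : CMSat m) (M : Set (Fin m)) : Prop :=
  ∀ i : Fin m, ∃! j : Fin 3, φ.cl i j ∈ M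

/-- Index set of the gadgets of the union `U_{τ_PPT^b}(φ)`. -/
inductive PPTIdx (m : ℕ) : Type
  | H : PPTIdx m
  | D : Fin 4 → PPTIdx m
  | F : Fin (2 * m) → PPTIdx m
  | G : Fin (2 * m) → PPTIdx m
  | M : Fin m → PPTIdx m
  | T : Fin m → PPTIdx m

/-- Events of the union `U_{τ_PPT^b}(φ)`. -/
inductive PPTEv (m : ℕ) : Type
  | k : PPTEv m
  | y0 : PPTEv m
  | y1 : PPTEv m
  | o0 : PPTEv m
  | o1 : PPTEv m
  | kk : Fin 4 → PPTEv m
  | z : Fin (2 * m) → PPTEv m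
  | X : Fin m → PPTEv m
  deriving DecidableEq

/-- The label sequences of the linear gadgets of `U_{τ_PPT^b}(φ)`. -/
def gadPPT (b : ℕ) {m : ℕ} (φ : CMSat m) : PPTIdx m → List (PPTEv m)
  | .H => List.replicate b .k ++ [.y0, .o0] ++ List.replicate b .k ++
      [.y1, .y0, .o1] ++ List.replicate b .k
  | .D j => [.o0, .kk j, .o1]
  | .F j => [.kk 0, .z j]
  | .G j => [.z j, .o0]
  | .M i => .kk 1 :: List.replicate b (.X i)
  | .T i => .kk 2 :: (List.replicate b (.X (φ.cl i 0)) ++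
      .z ⟨2 * (i : ℕ), by have := i.isLt; omega⟩ :: (List.replicate b (.X (φ.cl i 1)) ++
      .z ⟨2 * (i : ℕ) + 1, by have := i.isLt; omega⟩ ::
        (List.replicate b (.X (φ.cl i 2)) ++ [.kk 3])))

/-- The union `U_{τ_PPT^b}(φ)` of linear gadget TS. -/
noncomputable def UPPT (b : ℕ) {m : ℕ} (φ : CMSat m) :
    ∀ i : PPTIdx m, TS (Fin ((gadPPT b φ i).length + 1)) (PPTEv m) :=
  fun i => linOfList (gadPPT b φ i) PPTEv.k

/-! **Idea.** Every constituent is a line, and on lines the ESSP implies the SSP: two states with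
equal supports have successors with equal supports, so walking along equal labels leads to two
states one of which lacks an event enabled at the other.

For the ESSP, a region of a pure net type is an integer weight on the events together with start
values keeping all prefix sums in `{0, …, b}`. Apart from `k` and `y₀`, every event occurs at most
once in a constituent, or in a single run of length `b` (the `X_v`), so it can carry a weight that
raises the support from `0` to `b` along its run. One such weight separates an event from all states
that it no longer follows; where the event is still to come, the weight is balanced by a negative
one on the event whose run precedes it. Outside `H₁`, a weight that lives on `H₁` alone separates
`k` and `y₀` from all states. Within `H₁`, the atoms of its own events are solved one by one; those
of `k` need a region with `y₀ ↦ 0` and `k ↦ 1`, and this is where the model enters. -/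

section LinearSystems

variable {τ : NetType} {ι E : Type}

theorem linTS_delta_eq_some_iff {m : ℕ} {ev : ℕ → E} {s s' : Fin (m + 1)} {e : E} :
    (linTS m ev).delta s e = some s' ↔ (s : ℕ) < m ∧ ev s = e ∧ (s' : ℕ) = s + 1 := by
  simp only [linTS]
  split_ifs with h <;> simp [Fin.ext_iff] <;> grind

theorem linTS_delta_eq_none_iff {m : ℕ} {ev : ℕ → E} {s : Fin (m + 1)} {e : E} :
    (linTS m ev).delta s e = none ↔ ¬((s : ℕ) < m ∧ ev s = e) := by
  simp only [linTS]
  split_ifs with h <;> simp [h]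

theorem linOfList_delta_eq_some_iff {l : List E} {d e : E} {s s' : Fin (l.length + 1)} :
    (linOfList l d).delta s e = some s' ↔ l[(s : ℕ)]? = some e ∧ (s' : ℕ) = s + 1 := by
  rw [linOfList, linTS_delta_eq_some_iff]
  grind

theorem linOfList_delta_eq_none_iff {l : List E} {d e : E} {s : Fin (l.length + 1)} :
    (linOfList l d).delta s e = none ↔ l[(s : ℕ)]? ≠ some e := by
  rw [linOfList, linTS_delta_eq_none_iff]
  grind

/-- The event state separation atom `(e, s)`, with `s` a state of the constituent `A i`, is solved
by some `τ`-region of the union. -/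
def ESSASolvable (τ : NetType) {S : ι → Type} (A : ∀ i, TS (S i) E) (e : E) (i : ι) (s : S i) :
    Prop :=
  ∃ sup sig, UnionRegion τ A sup sig ∧ τ.delta (sup ⟨i, s⟩) (sig e) = none

theorem exists_unionRegion_sup_ne_of_lt {n : ι → ℕ} {ev : ι → ℕ → E}
    (h : UnionHasESSP τ fun i => linTS (n i) (ev i)) (i : ι) (s s' : Fin (n i + 1)) (hlt : s < s') :
    ∃ sup sig, UnionRegion τ (fun i => linTS (n i) (ev i)) sup sig ∧ sup ⟨i, s⟩ ≠ sup ⟨i, s'⟩ := by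
  have hs : (s : ℕ) < n i := by omega
  let t : Fin (n i + 1) := ⟨s + 1, by omega⟩
  have hst : (linTS (n i) (ev i)).delta s (ev i s) = some t :=
    linTS_delta_eq_some_iff.mpr ⟨hs, rfl, rfl⟩
  by_cases hs' : (s' : ℕ) < n i ∧ ev i s' = ev i s
  · let t' : Fin (n i + 1) := ⟨s' + 1, by omega⟩
    have hst' : (linTS (n i) (ev i)).delta s' (ev i s) = some t' :=
      linTS_delta_eq_some_iff.mpr ⟨hs'.1, hs'.2, rfl⟩
    obtain ⟨sup, sig, hreg, hne⟩ :=
      exists_unionRegion_sup_ne_of_lt h i t t' (Fin.mk_lt_mk.mpr (by omega))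
    refine ⟨sup, sig, hreg, fun heq => hne (Option.some.inj ?_)⟩
    rw [← hreg.2.2 i s _ t hst, ← hreg.2.2 i s' _ t' hst', heq]
  · obtain ⟨sup, sig, hreg, hnone⟩ := h (ev i s) i s' (linTS_delta_eq_none_iff.mpr hs')
    refine ⟨sup, sig, hreg, fun heq => ?_⟩
    have hsome := hreg.2.2 i s _ t hst
    rw [heq, hnone] at hsome
    exact Option.some_ne_none _ hsome.symm
termination_by n i - s'

theorem UnionHasESSP.unionHasSSP {n : ι → ℕ} {ev : ι → ℕ → E}
    (h : UnionHasESSP τ fun i => linTS (n i) (ev i)) :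
    UnionHasSSP τ fun i => linTS (n i) (ev i) := by
  intro i s s' hne
  rcases hne.lt_or_gt with hlt | hgt
  · exact exists_unionRegion_sup_ne_of_lt h i s s' hlt
  · obtain ⟨sup, sig, hreg, hsup⟩ := exists_unionRegion_sup_ne_of_lt h i s' s hgt
    exact ⟨sup, sig, hreg, hsup.symm⟩

end LinearSystems

section Weights

variable {E ι : Type}

/-- The change of the support after the first `p` edges of a line labeled by `l`, if an event `e`
changes it by `w e`. -/
def prefixSum (w : E → ℤ) (l : List E) (p : ℕ) : ℤ := ((l.take p).map w).sum

theorem prefixSum_zero (w : E → ℤ) (l : List E) : prefixSum w l 0 = 0 := by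
  simp [prefixSum]

theorem prefixSum_nil (w : E → ℤ) (p : ℕ) : prefixSum w [] p = 0 := by
  simp [prefixSum]

theorem prefixSum_cons (w : E → ℤ) (e : E) (l : List E) (p : ℕ) :
    prefixSum w (e :: l) p = if p = 0 then 0 else w e + prefixSum w l (p - 1) := by
  cases p <;> simp [prefixSum]

theorem prefixSum_append (w : E → ℤ) (l l' : List E) (p : ℕ) :
    prefixSum w (l ++ l') p = prefixSum w l p + prefixSum w l' (p - l.length) := by
  simp [prefixSum, List.take_append]

theorem prefixSum_replicate (w : E → ℤ) (e : E) (n p : ℕ) :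
    prefixSum w (List.replicate n e) p = (min p n : ℕ) * w e := by
  simp [prefixSum, List.take_replicate]

theorem prefixSum_eq_zero {w : E → ℤ} {l : List E} (h : ∀ e ∈ l, w e = 0) (p : ℕ) :
    prefixSum w l p = 0 :=
  List.sum_eq_zero <| List.forall_mem_map.mpr fun e he => h e (List.mem_of_mem_take he)

theorem prefixSum_succ (w : E → ℤ) {l : List E} {p : ℕ} {e : E} (h : l[p]? = some e) :
    prefixSum w l (p + 1) = prefixSum w l p + w e := by
  simp [prefixSum, List.take_add_one, h]

theorem prefixSum_neg (w : E → ℤ) (l : List E) (p : ℕ) :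
    prefixSum (-w) l p = -prefixSum w l p := by
  simp [prefixSum, Pi.neg_def, List.sum_neg, Function.comp_def]

theorem prefixSum_sub (w w' : E → ℤ) (l : List E) (p : ℕ) :
    prefixSum (w - w') l p = prefixSum w l p - prefixSum w' l p := by
  rw [sub_eq_add_neg, sub_eq_add_neg, ← prefixSum_neg]
  exact List.sum_map_add

theorem prefixSum_single [DecidableEq E] (e : E) (x : ℤ) (l : List E) (p : ℕ) :
    prefixSum (Pi.single e x) l p = x * (l.take p).count e := by
  have hsingle : (Pi.single e x : E → ℤ) = fun a => if a = e then x else 0 :=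
    funext fun a => Pi.single_apply e x a
  rw [prefixSum, hsingle, List.sum_map_ite_eq]
  simp [mul_comm]

/-- Along a line labeled by `l` whose first state has support `a`, all supports lie in
`{0, …, b}`. -/
def Admits (b : ℕ) (w : E → ℤ) (l : List E) (a : ℤ) : Prop :=
  ∀ p, a + prefixSum w l p ∈ Set.Icc 0 (b : ℤ)

/-- The weights `w` are the net effects of the signature of some region of the union of the lines
`l i` with a pure `b`-bounded net type. -/
structure IsSignature (b : ℕ) (l : ι → List E) (w : E → ℤ) : Prop where
  abs_weight_le : ∀ e, |w e| ≤ b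
  exists_admits : ∀ i, ∃ a, Admits b w (l i) a

variable {b : ℕ} {w : E → ℤ}

theorem Admits.neg {l : List E} {a : ℤ} (h : Admits b w l a) : Admits b (-w) l (b - a) := by
  intro p
  have := h p
  rw [prefixSum_neg]
  simp only [Set.mem_Icc] at *
  omega

theorem Admits.abs_weight_le {l : List E} {a : ℤ} (h : Admits b w l a) {e : E} (he : e ∈ l) :
    |w e| ≤ b := by
  obtain ⟨p, hp⟩ := List.mem_iff_getElem?.mp he
  have h₀ := h p
  have h₁ := h (p + 1)
  rw [prefixSum_succ w hp] at h₁
  simp only [Set.mem_Icc, abs_le] at *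
  omega

@[simp]
theorem admits_nil {a : ℤ} : Admits b w [] a ↔ a ∈ Set.Icc 0 (b : ℤ) := by
  simp [Admits, prefixSum_nil]

@[simp]
theorem admits_cons {e : E} {l : List E} {a : ℤ} :
    Admits b w (e :: l) a ↔ a ∈ Set.Icc 0 (b : ℤ) ∧ Admits b w l (a + w e) := by
  refine ⟨fun h => ⟨by simpa [prefixSum_zero] using h 0, fun p => ?_⟩, fun h p => ?_⟩
  · simpa [prefixSum_cons, add_assoc] using h (p + 1)
  · cases p with
    | zero => simpa [prefixSum_zero] using h.1
    | succ p => simpa [prefixSum_cons, add_assoc] using h.2 p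

@[simp]
theorem admits_append {l l' : List E} {a : ℤ} :
    Admits b w (l ++ l') a ↔ Admits b w l a ∧ Admits b w l' (a + (l.map w).sum) := by
  induction l generalizing a with
  | nil => simpa using fun h : Admits b w l' a => by simpa [prefixSum_zero] using h 0
  | cons e l ih => simp [ih, and_assoc, add_assoc]

-- The support is monotone along a run of one event, so that only its ends need to be checked.
@[simp]
theorem admits_replicate {n : ℕ} {e : E} {a : ℤ} :
    Admits b w (List.replicate n e) a ↔
      a ∈ Set.Icc 0 (b : ℤ) ∧ a + n * w e ∈ Set.Icc 0 (b : ℤ) := by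
  refine ⟨fun h => ⟨by simpa [prefixSum_zero] using h 0, ?_⟩, fun ⟨h₀, h₁⟩ p => ?_⟩
  · simpa [prefixSum_replicate] using h n
  · have hp : ((min p n : ℕ) : ℤ) ≤ n := by omega
    rw [prefixSum_replicate]
    simp only [Set.mem_Icc] at *
    constructor <;> rcases le_total 0 (w e) with hw | hw <;> nlinarith

theorem admits_of_forall_eq_zero {l : List E} (h : ∀ e ∈ l, w e = 0) {a : ℤ}
    (ha : a ∈ Set.Icc 0 (b : ℤ)) : Admits b w l a := by
  intro p
  rwa [prefixSum_eq_zero h, add_zero]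

/-- The event of a pure net type with net effect `z`. -/
def pureEvent (z : ℤ) : BEvent := .pair (-z).toNat z.toNat

theorem pureEvent_mem_events {z : ℤ} (h : |z| ≤ b) : pureEvent z ∈ (tauPPT b).events := by
  rw [abs_le] at h
  exact ⟨_, _, rfl, by omega, by omega, by omega⟩

theorem tauPPT_delta_pureEvent (b : ℕ) {s : ℤ} (hs : 0 ≤ s) (z : ℤ) :
    (tauPPT b).delta s.toNat (pureEvent z) =
      if s + z ∈ Set.Icc 0 (b : ℤ) then some (s + z).toNat else none := by
  simp only [tauPPT, deltaPT, pureEvent, Set.mem_Icc]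
  split_ifs <;> first | rfl | omega | (congr 1; omega)

variable {l : ι → List E}

theorem unionRegion_of_admits (hw : ∀ e, |w e| ≤ b) {a : ι → ℤ} (ha : ∀ i, Admits b w (l i) (a i))
    (d : E) :
    UnionRegion (tauPPT b) (fun i => linOfList (l i) d)
      (fun x => (a x.1 + prefixSum w (l x.1) x.2).toNat) (fun e => pureEvent (w e)) := by
  refine ⟨fun x => ?_, fun e => pureEvent_mem_events (hw e), fun i s e s' hδ => ?_⟩
  · exact Int.toNat_le.mpr (ha x.1 x.2).2
  · obtain ⟨he, hs'⟩ := linOfList_delta_eq_some_iff.mp hδ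
    have hnext := ha i (s + 1)
    rw [prefixSum_succ w he, ← add_assoc] at hnext
    simp only [hs', prefixSum_succ w he]
    rw [tauPPT_delta_pureEvent b (ha i s).1, if_pos hnext, add_assoc]

open Classical in
theorem IsSignature.essaSolvable (hw : IsSignature b l w) {i : ι} {a : ℤ}
    (ha : Admits b w (l i) a) {s : Fin ((l i).length + 1)} {e : E}
    (hs : a + prefixSum w (l i) s + w e ∉ Set.Icc 0 (b : ℤ)) (d : E) :
    ESSASolvable (tauPPT b) (fun i => linOfList (l i) d) e i s := by
  choose a' ha' using hw.exists_admits
  have hupd : ∀ j, Admits b w (l j) (Function.update a' i a j) := by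
    intro j
    rcases eq_or_ne j i with rfl | hj
    · simpa using ha
    · simpa [hj] using ha' j
  refine ⟨_, _, unionRegion_of_admits hw.abs_weight_le hupd d, ?_⟩
  simp only [Function.update_self]
  rw [tauPPT_delta_pureEvent b (ha s).1, if_neg hs]

theorem IsSignature.essaSolvable_of_forall_eq_zero (hw : IsSignature b l w) {i : ι}
    (hi : ∀ e ∈ l i, w e = 0) {e : E} (he : w e ≠ 0) (s : Fin ((l i).length + 1)) (d : E) :
    ESSASolvable (tauPPT b) (fun i => linOfList (l i) d) e i s := by
  rcases he.lt_or_gt with hneg | hpos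
  · refine hw.essaSolvable (admits_of_forall_eq_zero hi (a := 0) (by simp)) ?_ d
    simpa [prefixSum_eq_zero hi] using fun h => absurd h hneg.not_ge
  · refine hw.essaSolvable (admits_of_forall_eq_zero hi (a := b) (by simp)) ?_ d
    simpa [prefixSum_eq_zero hi] using fun _ => hpos

end Weights

section BlockEvents

variable {E ι : Type} {S : Set E}

/-- The occurrences in `l` of any two distinct events of `S` do not interleave: one of the events
does not occur before the other. -/
def ClusteredOn (S : Set E) (l : List E) : Prop :=
  S.Pairwise fun e f => ¬[e, f].Sublist l ∨ ¬[f, e].Sublist l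

theorem clusteredOn_nil : ClusteredOn S ([] : List E) := by
  intro e _ f _ _
  simp

theorem pair_sublist_replicate_append {e f a : E} (hef : e ≠ f) {n : ℕ} {l : List E}
    (h : [e, f].Sublist (List.replicate n a ++ l)) : [e, f].Sublist l ∨ e = a ∧ f ∈ l := by
  induction n with
  | zero => exact .inl (by simpa using h)
  | succ n ih =>
    rw [List.replicate_succ, List.cons_append, List.cons_sublist_cons'] at h
    rcases h with h | ⟨rfl, h⟩
    · exact ih h
    · rw [List.singleton_sublist, List.mem_append] at h
      exact .inr ⟨rfl, h.resolve_left fun hf => hef (List.eq_of_mem_replicate hf).symm⟩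

theorem ClusteredOn.replicate_append {l : List E} (hl : ClusteredOn S l) {a : E}
    (ha : a ∈ S → a ∉ l) (n : ℕ) : ClusteredOn S (List.replicate n a ++ l) := by
  intro e he f hf hef
  by_contra! hcon
  have hmem : ∀ {x y : E}, [x, y].Sublist l → x ∈ l ∧ y ∈ l := fun h =>
    ⟨h.subset (by simp), h.subset (by simp)⟩
  have hcl := hl he hf hef
  rcases pair_sublist_replicate_append hef hcon.1 with h₁ | ⟨rfl, _⟩ <;>
    rcases pair_sublist_replicate_append hef.symm hcon.2 with h₂ | ⟨rfl, _⟩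
  · exact hcl.elim (· h₁) (· h₂)
  · exact ha hf (hmem h₁).2
  · exact ha he (hmem h₂).2
  · exact hef rfl

theorem clusteredOn_replicate (n : ℕ) (a : E) : ClusteredOn S (List.replicate n a) := by
  simpa using clusteredOn_nil.replicate_append (a := a) (fun _ => List.not_mem_nil) n

theorem ClusteredOn.cons {l : List E} (hl : ClusteredOn S l) {a : E} (ha : a ∈ S → a ∉ l) :
    ClusteredOn S (a :: l) :=
  hl.replicate_append ha 1

theorem not_mem_take_or_not_mem_drop {e f : E} {l : List E} (h : ¬[e, f].Sublist l) (p : ℕ) :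
    e ∉ l.take p ∨ f ∉ l.drop p := by
  by_contra! hcon
  have := (List.singleton_sublist.mpr hcon.1).append (List.singleton_sublist.mpr hcon.2)
  rw [List.take_append_drop] at this
  exact h this

theorem exists_rel_of_mem_of_head?_ne {R : E → E → Prop} {l : List E} (hl : l.IsChain R) {e : E}
    (he : e ∈ l) (hhead : l.head? ≠ some e) : ∃ f ∈ l, f ≠ e ∧ R f e ∧ [f, e].Sublist l := by
  obtain ⟨l₁, l₂, rfl, hnot⟩ := List.eq_append_cons_of_mem he
  rcases l₁.eq_nil_or_concat with rfl | ⟨l₁, f, rfl⟩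
  · simp at hhead
  · rw [List.concat_eq_append, List.append_assoc, List.singleton_append] at *
    have hR := (List.isChain_append_cons_cons.mp hl).2.1
    refine ⟨f, by simp, fun hfe => hnot (by simp [hfe]), hR, ?_⟩
    exact .trans (by simp) (List.sublist_append_right _ _)

variable [DecidableEq E] {b : ℕ} {c : E → ℕ}

/-- The events of `S` can be given the weight `c` independently: their runs in the lines `l i` do
not interleave, and no line contains more occurrences than the bound `b` allows. -/
structure IsBlockSystem (b : ℕ) (l : ι → List E) (S : Set E) (c : E → ℕ) : Prop where
  pos : ∀ e ∈ S, 0 < c e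
  le : ∀ e ∈ S, c e ≤ b
  mul_count_le : ∀ e ∈ S, ∀ i, c e * (l i).count e ≤ b
  clusteredOn : ∀ i, ClusteredOn S (l i)

theorem count_take_add_count_drop (e : E) (l : List E) (p : ℕ) :
    (l.take p).count e + (l.drop p).count e = l.count e := by
  rw [← List.count_append, List.take_append_drop]

theorem prefixSum_single_of_start (c : ℕ) (e : E) (l : List E) (p : ℕ) :
    (b - c * l.count e : ℤ) + prefixSum (Pi.single e (c : ℤ)) l p = b - c * (l.drop p).count e := by
  rw [prefixSum_single, ← count_take_add_count_drop e l p]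
  push_cast
  ring

theorem prefixSum_single_sub_single (c : E → ℕ) (e f : E) (l : List E) (p : ℕ) :
    (c f * l.count f : ℤ) + prefixSum (Pi.single e (c e : ℤ) - Pi.single f (c f : ℤ)) l p =
      c e * (l.take p).count e + c f * (l.drop p).count f := by
  rw [prefixSum_sub, prefixSum_single, prefixSum_single, ← count_take_add_count_drop f l p]
  push_cast
  ring

theorem admits_single {c : ℕ} {e : E} {l : List E} (h : c * l.count e ≤ b) :
    Admits b (Pi.single e (c : ℤ)) l (b - c * l.count e) := by
  intro p
  have hdrop : c * (l.drop p).count e ≤ b :=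
    (Nat.mul_le_mul_left c ((l.drop_sublist p).count_le e)).trans h
  rw [prefixSum_single_of_start, Set.mem_Icc]
  zify at hdrop
  exact ⟨sub_nonneg.mpr hdrop, sub_le_self _ (by positivity)⟩

theorem admits_single_sub_single {e f : E} {l : List E} (he : c e * l.count e ≤ b)
    (hf : c f * l.count f ≤ b) (h : ¬[e, f].Sublist l) :
    Admits b (Pi.single e (c e : ℤ) - Pi.single f (c f : ℤ)) l (c f * l.count f) := by
  intro p
  have htake : c e * (l.take p).count e ≤ b :=
    (Nat.mul_le_mul_left _ ((l.take_sublist p).count_le e)).trans he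
  have hdrop : c f * (l.drop p).count f ≤ b :=
    (Nat.mul_le_mul_left _ ((l.drop_sublist p).count_le f)).trans hf
  rw [prefixSum_single_sub_single, Set.mem_Icc]
  norm_cast
  refine ⟨Nat.zero_le _, ?_⟩
  rcases not_mem_take_or_not_mem_drop h p with h | h
  · simpa [List.count_eq_zero_of_not_mem h] using hdrop
  · simpa [List.count_eq_zero_of_not_mem h] using htake

namespace IsBlockSystem

variable {l : ι → List E} (hl : IsBlockSystem b l S c)
include hl

theorem isSignature_single {e : E} (he : e ∈ S) : IsSignature b l (Pi.single e (c e : ℤ)) where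
  abs_weight_le a := by
    have := hl.le e he
    rcases eq_or_ne a e with rfl | ha <;> simp [*]
  exists_admits i := ⟨_, admits_single (hl.mul_count_le e he i)⟩

theorem isSignature_single_sub_single {e f : E} (he : e ∈ S) (hf : f ∈ S) (hef : e ≠ f) :
    IsSignature b l (Pi.single e (c e : ℤ) - Pi.single f (c f : ℤ)) where
  abs_weight_le a := by
    have := hl.le e he
    have := hl.le f hf
    simp only [Pi.sub_apply, Pi.single_apply, abs_le]
    split_ifs <;> grind
  exists_admits i := by
    have hce := hl.mul_count_le e he i
    have hcf := hl.mul_count_le f hf i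
    rcases hl.clusteredOn i he hf hef with h | h
    · exact ⟨_, admits_single_sub_single hce hcf h⟩
    · exact ⟨_, by simpa only [neg_sub] using (admits_single_sub_single hcf hce h).neg⟩

theorem essaSolvable_of_not_mem_drop {e : E} (he : e ∈ S) {i : ι} {s : Fin ((l i).length + 1)}
    (hs : e ∉ (l i).drop s) (d : E) :
    ESSASolvable (tauPPT b) (fun i => linOfList (l i) d) e i s := by
  refine (hl.isSignature_single he).essaSolvable (admits_single (hl.mul_count_le e he i)) ?_ d
  have := hl.pos e he
  rw [prefixSum_single_of_start, List.count_eq_zero_of_not_mem hs, Pi.single_eq_same, Set.mem_Icc]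
  omega

theorem essaSolvable_of_mem_drop {e f : E} (he : e ∈ S) (hf : f ∈ S) (hef : e ≠ f)
    (hc : b < c f + c e) {i : ι} (h : [f, e].Sublist (l i)) {s : Fin ((l i).length + 1)}
    (hs : f ∈ (l i).drop s) (d : E) :
    ESSASolvable (tauPPT b) (fun i => linOfList (l i) d) e i s := by
  have hnot := (hl.clusteredOn i he hf hef).resolve_right (not_not_intro h)
  refine (hl.isSignature_single_sub_single he hf hef).essaSolvable
    (admits_single_sub_single (hl.mul_count_le e he i) (hl.mul_count_le f hf i) hnot) ?_ d
  have hle : c f ≤ c f * ((l i).drop s).count f :=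
    Nat.le_mul_of_pos_right _ (List.count_pos_iff.mpr hs)
  rw [prefixSum_single_sub_single, Set.mem_Icc, not_and]
  simp only [Pi.sub_apply, Pi.single_eq_same, Pi.single_eq_of_ne hef, sub_zero]
  norm_cast
  omega

-- If `e` is still to come, the event preceding its first occurrence serves as the counterweight.
theorem essaSolvable {i : ι} (hS : ∀ e ∈ l i, e ∈ S)
    (hchain : (l i).IsChain fun x y => x = y ∨ b < c x + c y) {e : E} (he : e ∈ S)
    {s : Fin ((l i).length + 1)} (hs : (l i)[(s : ℕ)]? ≠ some e) (d : E) :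
    ESSASolvable (tauPPT b) (fun i => linOfList (l i) d) e i s := by
  by_cases hmem : e ∈ (l i).drop s
  · obtain ⟨f, hf, hfe, hrel, hsub⟩ :=
      exists_rel_of_mem_of_head?_ne (hchain.drop s) hmem (by rwa [List.head?_drop])
    exact hl.essaSolvable_of_mem_drop he (hS f (List.mem_of_mem_drop hf)) hfe.symm
      (hrel.resolve_left hfe) (hsub.trans (List.drop_sublist _ _)) hf d
  · exact hl.essaSolvable_of_not_mem_drop he hmem d

end IsBlockSystem

end BlockEvents

section Gadgets

variable {b m : ℕ} {φ : CMSat m}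

/-- The weight of an event in a block system for `gadPPT`: an event occurring in runs of length `b`
can only carry the weight `1`. -/
def eventStep (b : ℕ) : PPTEv m → ℕ
  | .X _ => 1
  | _ => b

/-- The events all of whose occurrences in a gadget are consecutive, `k` and `y0` being the
exceptions. -/
def blockEvents : Set (PPTEv m) := {.k, .y0}ᶜ

theorem CMSat.cl_injective (φ : CMSat m) (i : Fin m) : Function.Injective (φ.cl i) :=
  (Fin.strictMono_iff_lt_succ.mpr fun j => by
    fin_cases j
    exacts [φ.mono01 i, φ.mono12 i]).injective

theorem clusteredOn_gadPPT (b : ℕ) (φ : CMSat m) (i : PPTIdx m) :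
    ClusteredOn blockEvents (gadPPT b φ i) := by
  cases i <;> simp only [gadPPT, List.append_assoc, List.cons_append, List.nil_append]
  all_goals
    repeat' first
      | exact clusteredOn_nil
      | refine clusteredOn_replicate _ _
      | refine ClusteredOn.replicate_append ?_ ?_ _
      | refine ClusteredOn.cons ?_ ?_
  all_goals simp [blockEvents, (φ.cl_injective _).eq_iff]

theorem isBlockSystem_gadPPT (hb : 1 ≤ b) (φ : CMSat m) :
    IsBlockSystem b (gadPPT b φ) blockEvents (eventStep b) where
  pos e _ := by cases e <;> simp only [eventStep] <;> omega
  le e _ := by cases e <;> simp only [eventStep] <;> omega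
  mul_count_le e he i := by
    have := φ.cl_injective
    cases i <;> cases e <;>
      simp_all [eventStep, blockEvents, gadPPT, List.count_cons, List.count_replicate] <;>
      grind [Function.Injective]
  clusteredOn := clusteredOn_gadPPT b φ

theorem mem_blockEvents_of_mem_gadPPT {i : PPTIdx m} (hi : i ≠ .H) {e : PPTEv m}
    (he : e ∈ gadPPT b φ i) : e ∈ blockEvents := by
  cases i <;> cases e <;> simp_all [blockEvents, gadPPT]

theorem isChain_gadPPT (hb : 1 ≤ b) {i : PPTIdx m} (hi : i ≠ .H) :
    (gadPPT b φ i).IsChain fun x y => x = y ∨ b < eventStep b x + eventStep b y := by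
  have hb' : b ≠ 0 := by omega
  cases i <;>
    simp [gadPPT, eventStep, List.isChain_append, List.isChain_cons, hb',
      List.getLast?_replicate, List.head?_replicate, List.isChain_replicate_of_rel] at *
  all_goals omega

end Gadgets

section HeadGadget

variable {b m : ℕ} {φ : CMSat m}

theorem length_gadPPT_H : (gadPPT b φ .H).length = 3 * b + 5 := by
  simp [gadPPT]
  ring

theorem getElem?_gadPPT_H (p : ℕ) :
    (gadPPT b φ .H)[p]? =
      if p = b ∨ p = 2 * b + 3 then some .y0
      else if p = b + 1 then some .o0
      else if p = 2 * b + 2 then some .y1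
      else if p = 2 * b + 4 then some .o1
      else if p < 3 * b + 5 then some .k
      else none := by
  simp only [gadPPT, List.append_assoc, List.cons_append, List.nil_append,
    List.getElem?_append, List.getElem?_cons, List.getElem?_replicate, List.length_replicate]
  split_ifs <;> first | rfl | omega

theorem prefixSum_gadPPT_H (w : PPTEv m → ℤ) (p : ℕ) :
    prefixSum w (gadPPT b φ .H) p =
      (min p b + min (p - (b + 2)) b + min (p - (2 * b + 5)) b : ℕ) * w .k +
      ((if b < p then w .y0 else 0) + if 2 * b + 3 < p then w .y0 else 0) +
      (if b + 1 < p then w .o0 else 0) + (if 2 * b + 2 < p then w .y1 else 0) +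
      (if 2 * b + 4 < p then w .o1 else 0) := by
  simp only [gadPPT, prefixSum_append, prefixSum_cons, prefixSum_nil, prefixSum_replicate,
    List.length_append, List.length_replicate, List.length_cons, List.length_nil]
  push_cast
  have htail : p - (b + (0 + 1 + 1) + b + (0 + 1 + 1 + 1)) = p - (2 * b + 5) := by omega
  rw [htail]
  simp only [add_mul]
  have hy0 : (p - b = 0) = ¬b < p := by grind
  have ho0 : (p - b - 1 = 0) = ¬b + 1 < p := by grind
  have hy1 : (p - (b + (0 + 1 + 1) + b) = 0) = ¬2 * b + 2 < p := by grind
  have hy0' : (p - (b + (0 + 1 + 1) + b) - 1 = 0) = ¬2 * b + 3 < p := by grind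
  have ho1 : (p - (b + (0 + 1 + 1) + b) - 1 - 1 = 0) = ¬2 * b + 4 < p := by grind
  simp only [hy0, ho0, hy1, hy0', ho1, ite_not]
  grind

/-- The weight with the given values on the events of `H₁` that vanishes on all other events. -/
@[simp]
def headWeight (k y0 y1 o0 o1 : ℤ) : PPTEv m → ℤ
  | .k => k
  | .y0 => y0
  | .y1 => y1
  | .o0 => o0
  | .o1 => o1
  | _ => 0

theorem isSignature_headWeight (hb : 1 ≤ b) {k y0 y1 o0 o1 a : ℤ}
    (ha : Admits b (headWeight k y0 y1 o0 o1) (gadPPT b φ .H) a) (ho : |o0 + o1| ≤ b) :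
    IsSignature b (gadPPT b φ) (headWeight k y0 y1 o0 o1) := by
  have habs : ∀ e : PPTEv m, |headWeight k y0 y1 o0 o1 e| ≤ b := by
    intro e
    by_cases he : e ∈ gadPPT b φ .H
    · exact ha.abs_weight_le he
    · cases e <;> simp_all [gadPPT]
  have ho0 : |o0| ≤ b := habs .o0
  have ho1 : |o1| ≤ b := habs .o1
  rw [abs_le] at ho0 ho1 ho
  refine ⟨habs, fun i => ?_⟩
  cases i
  case H => exact ⟨a, ha⟩
  case D =>
    refine ⟨max 0 (max (-o0) (-(o0 + o1))), ?_⟩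
    simp [gadPPT]
    omega
  case G =>
    refine ⟨max 0 (-o0), ?_⟩
    simp [gadPPT]
    omega
  all_goals
    refine ⟨0, admits_of_forall_eq_zero (fun e he => ?_) (by simp)⟩
    cases e <;> simp_all [gadPPT]

variable {s : Fin ((gadPPT b φ .H).length + 1)}

theorem essaSolvable_H_of_headWeight (hb : 1 ≤ b) (k y0 y1 o0 o1 a : ℤ)
    (ha : Admits b (headWeight k y0 y1 o0 o1) (gadPPT b φ .H) a) (ho : |o0 + o1| ≤ b)
    {e : PPTEv m} (he : headWeight k y0 y1 o0 o1 e = b)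
    (hs : 0 < a + prefixSum (headWeight k y0 y1 o0 o1) (gadPPT b φ .H) s) :
    ESSASolvable (tauPPT b) (UPPT b φ) e .H s := by
  refine (isSignature_headWeight hb ha ho).essaSolvable ha ?_ .k
  rw [he, Set.mem_Icc]
  omega

theorem essaSolvable_H_y0 (hb : 1 ≤ b) (hs : (gadPPT b φ .H)[(s : ℕ)]? ≠ some .y0) :
    ESSASolvable (tauPPT b) (UPPT b φ) .y0 .H s := by
  have hne : (s : ℕ) ≠ b ∧ (s : ℕ) ≠ 2 * b + 3 := by
    rw [getElem?_gadPPT_H] at hs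
    grind
  by_cases hbefore : (s : ℕ) < b
  · refine essaSolvable_H_of_headWeight hb (-1) b 0 0 0 b (by simp [gadPPT]) (by simp) rfl ?_
    simp [prefixSum_gadPPT_H]
    omega
  · refine essaSolvable_H_of_headWeight hb 0 b (-b) 0 0 0 (by simp [gadPPT]) (by simp) rfl ?_
    simp [prefixSum_gadPPT_H]
    omega

theorem essaSolvable_H_y1 (hb : 1 ≤ b) (hs : (gadPPT b φ .H)[(s : ℕ)]? ≠ some .y1) :
    ESSASolvable (tauPPT b) (UPPT b φ) .y1 .H s := by
  have hne : (s : ℕ) ≠ 2 * b + 2 := by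
    rw [getElem?_gadPPT_H] at hs
    grind
  by_cases hbefore : (s : ℕ) ≤ b + 1
  · refine essaSolvable_H_of_headWeight hb 0 0 b (-b) 0 b (by simp [gadPPT]) (by simp) rfl ?_
    simp [prefixSum_gadPPT_H]
    omega
  by_cases hbetween : (s : ℕ) < 2 * b + 2
  · refine essaSolvable_H_of_headWeight hb (-1) 0 b b 0 b (by simp [gadPPT]) (by simp) rfl ?_
    simp [prefixSum_gadPPT_H]
    omega
  · refine essaSolvable_H_of_headWeight hb 0 0 b 0 0 0 (by simp [gadPPT]) (by simp) rfl ?_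
    simp [prefixSum_gadPPT_H]
    omega

theorem essaSolvable_H_o0 (hb : 1 ≤ b) (hs : (gadPPT b φ .H)[(s : ℕ)]? ≠ some .o0) :
    ESSASolvable (tauPPT b) (UPPT b φ) .o0 .H s := by
  have hne : (s : ℕ) ≠ b + 1 := by
    rw [getElem?_gadPPT_H] at hs
    grind
  by_cases hbefore : (s : ℕ) ≤ b
  · refine essaSolvable_H_of_headWeight hb 0 (-b) 0 b 0 b (by simp [gadPPT]) (by simp) rfl ?_
    simp [prefixSum_gadPPT_H]
    omega
  · refine essaSolvable_H_of_headWeight hb 0 0 0 b 0 0 (by simp [gadPPT]) (by simp) rfl ?_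
    simp [prefixSum_gadPPT_H]
    omega

theorem essaSolvable_H_o1 (hb : 1 ≤ b) (hs : (gadPPT b φ .H)[(s : ℕ)]? ≠ some .o1) :
    ESSASolvable (tauPPT b) (UPPT b φ) .o1 .H s := by
  have hne : (s : ℕ) ≠ 2 * b + 4 := by
    rw [getElem?_gadPPT_H] at hs
    grind
  by_cases hbefore : (s : ℕ) ≤ 2 * b + 2
  · refine essaSolvable_H_of_headWeight hb 0 0 (-b) 0 b b (by simp [gadPPT]) (by simp) rfl ?_
    simp [prefixSum_gadPPT_H]
    omega
  by_cases hbetween : (s : ℕ) = 2 * b + 3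
  · refine essaSolvable_H_of_headWeight hb 0 (-b) b 0 b b (by simp [gadPPT]) (by simp) rfl ?_
    simp [prefixSum_gadPPT_H]
    omega
  · refine essaSolvable_H_of_headWeight hb 0 0 0 0 b 0 (by simp [gadPPT]) (by simp) rfl ?_
    simp [prefixSum_gadPPT_H]
    omega

theorem essaSolvable_of_not_mem_blockEvents (hb : 1 ≤ b) {i : PPTIdx m} (hi : i ≠ .H)
    {e : PPTEv m} (he : e ∉ blockEvents) (s : Fin ((gadPPT b φ i).length + 1)) :
    ESSASolvable (tauPPT b) (UPPT b φ) e i s := by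
  have hH : Admits b (headWeight (-1) b 0 0 0) (gadPPT b φ .H) b := by simp [gadPPT]
  refine (isSignature_headWeight hb hH (by simp)).essaSolvable_of_forall_eq_zero ?_ ?_ s .k
  · intro f hf
    have := mem_blockEvents_of_mem_gadPPT hi hf
    cases f <;> simp_all [blockEvents]
  · cases e <;> simp_all [blockEvents]
    omega

open Classical in
/-- The weight of a region in which `k` has weight `1` and all states of `H₁` where `k` is disabled
have support `b`. The weight of the `o_j` forces the weight `b` of the `k_j`, so a clause gadget has
to descend by `b` in all along its variables; `M` picks the one that does. -/
noncomputable def modelWeight (b : ℕ) (M : Set (Fin m)) : PPTEv m → ℤ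
  | .k => 1
  | .o0 | .o1 => -b
  | .kk _ => b
  | .X v => if v ∈ M then -1 else 0
  | _ => 0

theorem isSignature_modelWeight (hb : 1 ≤ b) {M : Set (Fin m)} (hM : OneInThreeModel φ M) :
    IsSignature b (gadPPT b φ) (modelWeight b M) := by
  refine ⟨fun e => ?_, fun i => ?_⟩
  · cases e <;> simp [modelWeight]
    all_goals grind
  cases i
  case D => exact ⟨b, by simp [gadPPT, modelWeight]⟩
  case G => exact ⟨b, by simp [gadPPT, modelWeight]⟩
  case T i =>
    refine ⟨0, ?_⟩
    obtain ⟨j, hj, huniq⟩ := hM i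
    have hmem : ∀ j', φ.cl i j' ∈ M ↔ j' = j := fun j' => ⟨huniq j', fun h => h ▸ hj⟩
    fin_cases j <;> simp [gadPPT, modelWeight, hmem]
  case M v =>
    refine ⟨0, ?_⟩
    by_cases hv : v ∈ M <;> simp [gadPPT, modelWeight, hv]
  all_goals exact ⟨0, by simp [gadPPT, modelWeight]⟩

theorem essaSolvable_H_k (hb : 1 ≤ b) {M : Set (Fin m)} (hM : OneInThreeModel φ M)
    (hs : (gadPPT b φ .H)[(s : ℕ)]? ≠ some .k) :
    ESSASolvable (tauPPT b) (UPPT b φ) .k .H s := by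
  have hlt : (s : ℕ) < 3 * b + 5 + 1 := s.isLt.trans_eq (congrArg _ length_gadPPT_H)
  rw [getElem?_gadPPT_H] at hs
  have hadm : Admits b (modelWeight b M) (gadPPT b φ .H) 0 := by simp [gadPPT, modelWeight]
  refine (isSignature_modelWeight hb hM).essaSolvable hadm ?_ .k
  simp [prefixSum_gadPPT_H, modelWeight]
  grind

end HeadGadget

theorem essaSolvable_UPPT {b m : ℕ} (hb : 1 ≤ b) {φ : CMSat m} {M : Set (Fin m)}
    (hM : OneInThreeModel φ M) {e : PPTEv m} {i : PPTIdx m}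
    {s : Fin ((gadPPT b φ i).length + 1)} (hs : (gadPPT b φ i)[(s : ℕ)]? ≠ some e) :
    ESSASolvable (tauPPT b) (UPPT b φ) e i s := by
  have hblock := isBlockSystem_gadPPT hb φ
  rcases eq_or_ne i .H with rfl | hi
  · cases e with
    | k => exact essaSolvable_H_k hb hM hs
    | y0 => exact essaSolvable_H_y0 hb hs
    | y1 => exact essaSolvable_H_y1 hb hs
    | o0 => exact essaSolvable_H_o0 hb hs
    | o1 => exact essaSolvable_H_o1 hb hs
    | _ =>
      exact hblock.essaSolvable_of_not_mem_drop (by simp [blockEvents])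
        (fun h => by simpa [gadPPT] using List.mem_of_mem_drop h) .k
  · by_cases he : e ∈ blockEvents
    · exact hblock.essaSolvable (fun _ => mem_blockEvents_of_mem_gadPPT hi)
        (isChain_gadPPT hb hi) he hs .k
    · exact essaSolvable_of_not_mem_blockEvents hb hi he s

/-- If the cubic monotone one-in-three 3-SAT instance `φ` has a
one-in-three model, then the union `U_{τ_PPT^b}(φ)` has the `τ_PPT^b`-ESSP and the
`τ_PPT^b`-SSP. -/
theorem stmt7 (b : ℕ) (hb : 1 ≤ b) {m : ℕ} (φ : CMSat m)
    (M : Set (Fin m)) (hM : OneInThreeModel φ M) :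
    UnionHasESSP (tauPPT b) (UPPT b φ) ∧ UnionHasSSP (tauPPT b) (UPPT b φ) := by
  have hE : UnionHasESSP (tauPPT b) (UPPT b φ) := fun _ _ _ hδ =>
    essaSolvable_UPPT hb hM (linOfList_delta_eq_none_iff.mp hδ)
  exact ⟨hE, UnionHasESSP.unionHasSSP (ev := fun i p => (gadPPT b φ i).getD p .k) hE⟩

end PNS
end
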